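/- Let q be an odd prime power of the form q = 2ab − 1, where a, b are odd positive integers with gcd(a,b) = 1. Let c be an integer with 1 ≤ c ≤ 2(a+b−1), and set c_1 = c if 1 ≤ c ≤ a+b−1 and c_1 = ⌊c/2⌋ if a+b ≤ c ≤ 2(a+b−1). Then for every integer s with 1 ≤ s ≤ ab + c_1 − 2, there exists a linear code C over 𝔽_{q²} of length n = c(q−1), dimension n − s, and minimum distance s + 1, such that C^{⊥H} ⊆ C. -/

import Mathlib

/-- Hamming weight: the number of nonzero coordinates. -/
noncomputable def wt {F : Type*} [Zero F] {n : ℕ} (x : Fin n → F) : ℕ :=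
  Set.ncard {i | x i ≠ 0}

/-- The Hermitian dual code of a linear code C ⊆ (F_{q²})^n. -/
noncomputable def dualH {F : Type*} [Field F] (q n : ℕ) (C : Submodule F (Fin n → F)) :
    Submodule F (Fin n → F) where
  carrier := {x | ∀ y ∈ C, ∑ i, x i * (y i) ^ q = 0}
  add_mem' := by
    intro a b ha hb y hy
    simp only [Set.mem_setOf_eq] at *
    simp [add_mul, Finset.sum_add_distrib, ha y hy, hb y hy]
  zero_mem' := by
    intro y hy; simp
  smul_mem' := by
    intro c x hx y hy
    simp only [Set.mem_setOf_eq] at *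
    simp [smul_eq_mul, mul_assoc, ← Finset.mul_sum, hx y hy]

/-!
Let `h = g ^ (q + 1)` generate `𝔽_q^*`, with `g` a generator of `𝔽_{q²}^*`. Take a generalized
Reed-Solomon code with points `g ^ k * h ^ l` and column multipliers whose norm is
`u k * (h ^ l) ^ (2 - r)`. In the Hermitian product of the monomials of degrees `i, j < s` the sum
over `l` vanishes unless `q - 1` divides `i + j + 2 - r`. For `s ≤ (q + 1) / 2 + r - 2` that leaves
only `i + j + 2 = r` and `i + j + 2 = r + (q - 1)`. In the second case both exponents are at least
`(q - 1) / 2`, and removing that much from each contributes the sign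
`(g ^ k) ^ ((q + 1) * (q - 1) / 2) = (-1) ^ k`. So `u` has to annihilate both the plain and the
alternating sums over `k` in degree `i + j + 2 = r`. It suffices to do this separately for even
and odd `k`, and Lagrange interpolation at the nodes `(g ^ k) ^ (q - 1)` provides such weights in
`𝔽_q^*`. Using only even `k` allows `r = c`, using both parities allows `r = c / 2`.
-/

open Finset

section HermitianDual

variable {F : Type*} [Field F] {n q : ℕ} {φ : F →+* F}

theorem mem_dualH_iff {C : Submodule F (Fin n → F)} {x : Fin n → F} :
    x ∈ dualH q n C ↔ ∀ y ∈ C, ∑ i, x i * y i ^ q = 0 :=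
  Iff.rfl

theorem mem_dualH_span_iff (hφ : ∀ x, φ x = x ^ q) {S : Set (Fin n → F)} {x : Fin n → F} :
    x ∈ dualH q n (Submodule.span F S) ↔ ∀ y ∈ S, ∑ i, x i * y i ^ q = 0 := by
  refine ⟨fun h y hy => h y (Submodule.subset_span hy), fun h y hy => ?_⟩
  simp only [← hφ] at h ⊢
  induction hy using Submodule.span_induction with
  | mem y hy => exact h y hy
  | zero => simp
  | add y z _ _ hy hz => simp [mul_add, sum_add_distrib, hy, hz]
  | smul r y _ hy =>
    simp only [Pi.smul_apply, smul_eq_mul, map_mul, mul_left_comm _ (φ r), ← mul_sum, hy, mul_zero]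

theorem le_dualH_dualH (hφ : ∀ x, φ x = x ^ q) (hinv : Function.Involutive φ)
    (C : Submodule F (Fin n → F)) : C ≤ dualH q n (dualH q n C) := by
  intro x hx y hy
  have hyx := congrArg φ (hy x hx)
  simpa [← hφ, hinv _, mul_comm] using hyx

/-- `x` lies in the Hermitian dual iff `φ ∘ x` lies in the Euclidean dual, so that
the Hermitian dual is semilinearly isomorphic to the dual annihilator. -/
theorem finrank_dualH (hφ : ∀ x, φ x = x ^ q) (hinv : Function.Involutive φ)
    (C : Submodule F (Fin n → F)) :
    Module.finrank F (dualH q n C) = n - Module.finrank F C := by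
  let conj : (Fin n → F) ≃+ Module.Dual F (Fin n → F) :=
    (AddEquiv.piCongrRight fun _ => AddEquiv.ofBijective φ hinv.bijective).trans
      (dotProductEquiv F (Fin n)).toAddEquiv
  have conj_apply (x y) : conj x y = φ (∑ i, x i * y i ^ q) := by
    simp [conj, dotProduct, ← hφ, hinv _]
  have mem_iff (x) : x ∈ dualH q n C ↔ conj x ∈ C.dualAnnihilator := by
    simp only [mem_dualH_iff, Submodule.mem_dualAnnihilator, conj_apply, map_eq_zero]
  have rank_eq : Module.rank F (dualH q n C) = Module.rank F C.dualAnnihilator :=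
    rank_eq_of_equiv_equiv φ
      { conj.toEquiv.subtypeEquiv mem_iff with
        map_add' := fun x y => Subtype.ext (map_add conj _ _) }
      hinv.bijective fun r x => Subtype.ext <| LinearMap.ext fun y => by
        change conj (r • (x : Fin n → F)) y = φ r * conj x y
        simp only [conj_apply, Pi.smul_apply, smul_eq_mul, mul_assoc, ← mul_sum, map_mul]
  have finrank_eq : Module.finrank F (dualH q n C) = Module.finrank F C.dualAnnihilator :=
    congrArg Cardinal.toNat rank_eq
  have := Subspace.finrank_add_finrank_dualAnnihilator_eq C
  rw [Module.finrank_fin_fun] at this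
  omega

theorem dualH_dualH (hφ : ∀ x, φ x = x ^ q) (hinv : Function.Involutive φ)
    (C : Submodule F (Fin n → F)) : dualH q n (dualH q n C) = C := by
  have hC : Module.finrank F C ≤ n := by simpa using C.finrank_le
  refine (Submodule.eq_of_le_of_finrank_eq (le_dualH_dualH hφ hinv C) ?_).symm
  rw [finrank_dualH hφ hinv, finrank_dualH hφ hinv]
  omega

end HermitianDual

section HammingWeight

variable {F : Type*} [Field F] {n s : ℕ}

/-- The Singleton bound. -/
theorem exists_mem_ne_zero_wt_le {C : Submodule F (Fin n → F)} {d : ℕ} (hd : d ≤ n)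
    (hC : n - d < Module.finrank F C) : ∃ x ∈ C, x ≠ 0 ∧ wt x ≤ d := by
  classical
  obtain ⟨S, hS⟩ : ∃ S : Finset (Fin n), #S = d :=
    (exists_subset_card_eq (s := univ) (by simpa using hd)).imp fun _ => And.right
  let restrict : C →ₗ[F] ↥Sᶜ → F := LinearMap.funLeft F F Subtype.val ∘ₗ C.subtype
  obtain ⟨⟨x, hx⟩, hker, hne⟩ := (Submodule.ne_bot_iff _).1 <|
    LinearMap.ker_ne_bot_of_finrank_lt (f := restrict) (by simpa [card_compl, hS] using hC)
  have support_subset : {i | x i ≠ 0} ⊆ (S : Set (Fin n)) := fun i hi => by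
    by_contra hiS
    exact hi (congrFun (LinearMap.mem_ker.1 hker) ⟨i, mem_compl.2 hiS⟩)
  refine ⟨x, hx, by simpa using hne, ?_⟩
  simpa [wt, Set.ncard_coe_finset, hS] using Set.ncard_le_ncard support_subset

theorem isLeast_wt_of_forall_lt_wt {C : Submodule F (Fin n → F)} (hs : s < n)
    (hC : Module.finrank F C = n - s) (hwt : ∀ x ∈ C, x ≠ 0 → s < wt x) :
    IsLeast {d : ℕ | ∃ x ∈ C, x ≠ 0 ∧ wt x = d} (s + 1) := by
  obtain ⟨x, hx, hne, hle⟩ := exists_mem_ne_zero_wt_le (d := s + 1) hs (C := C) (by omega)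
  refine ⟨⟨x, hx, hne, hle.antisymm (hwt x hx hne)⟩, ?_⟩
  rintro _ ⟨y, hy, hne, rfl⟩
  exact hwt y hy hne

end HammingWeight

section ReedSolomon

variable {F : Type*} [Field F] {n q s : ℕ} {φ : F →+* F} {x v : Fin n → F}

/-- The generalized Reed-Solomon code with evaluation points `x` and column multipliers `v`: the
words `(v i * f (x i))ᵢ` for `deg f < s`, presented as the span of those of the monomials. -/
def grsCode (x v : Fin n → F) (s : ℕ) : Submodule F (Fin n → F) :=
  Submodule.span F (Set.range fun (a : Fin s) i => v i * x i ^ (a : ℕ))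

theorem finrank_grsCode (hs : s ≤ n) (hx : Function.Injective x) (hv : ∀ i, v i ≠ 0) :
    Module.finrank F (grsCode x v s) = s := by
  rw [grsCode, finrank_span_eq_card, Fintype.card_fin]
  refine Fintype.linearIndependent_iff.2 fun c hc => congrFun ?_
  refine Matrix.eq_zero_of_forall_index_sum_mul_pow_eq_zero
    (hx.comp (Fin.castLE_injective hs)) fun j => ?_
  have hj := congrFun hc (Fin.castLE hs j)
  simp only [Finset.sum_apply, Pi.smul_apply, smul_eq_mul, mul_left_comm (c _), ← mul_sum,
    Pi.zero_apply] at hj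
  exact (mul_eq_zero.1 hj).resolve_left (hv _)

theorem eq_zero_of_forall_sum_mul_pow_eq_zero_of_wt_le {y : Fin n → F}
    (hx : Function.Injective x) (hy : ∀ a < s, ∑ i, y i * x i ^ a = 0) (hwt : wt y ≤ s) :
    y = 0 := by
  classical
  have hcard : #{i | y i ≠ 0} = wt y := by simp [wt, Set.ncard_eq_toFinset_card']
  let e : Fin (wt y) → Fin n := orderEmbOfFin _ hcard
  have he : Function.Injective e := (orderEmbOfFin _ hcard).injective
  have hrange (i) (hi : i ∉ Set.range e) : y i = 0 := by
    simpa [e, range_orderEmbOfFin] using hi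
  have hye : y ∘ e = 0 := by
    refine Matrix.eq_zero_of_forall_pow_sum_mul_pow_eq_zero (hx.comp he) fun a => ?_
    refine (Fintype.sum_of_injective e he _ (fun i => y i * x i ^ (a : ℕ)) ?_ fun _ => rfl).trans
      (hy a (a.2.trans_le hwt))
    exact fun i hi => by rw [hrange i hi, zero_mul]
  funext i
  by_cases hi : i ∈ Set.range e
  · obtain ⟨j, rfl⟩ := hi
    exact congrFun hye j
  · exact hrange i hi

theorem lt_wt_of_mem_dualH_grsCode (hφ : ∀ x, φ x = x ^ q)
    (hx : Function.Injective x) (hv : ∀ i, v i ≠ 0) {y : Fin n → F}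
    (hy : y ∈ dualH q n (grsCode x v s)) (hne : y ≠ 0) : s < wt y := by
  contrapose! hne
  rw [grsCode, mem_dualH_span_iff hφ, Set.forall_mem_range] at hy
  have hyv : (fun i => y i * φ (v i)) = 0 := by
    refine eq_zero_of_forall_sum_mul_pow_eq_zero_of_wt_le (x := φ ∘ x) (s := s)
      (φ.injective.comp hx) (fun a ha => ?_) ?_
    · simpa [← hφ, mul_assoc] using hy ⟨a, ha⟩
    · simpa [wt, hv] using hne
  funext i
  exact (mul_eq_zero.1 (congrFun hyv i)).resolve_right ((map_ne_zero φ).2 (hv i))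

theorem grsCode_le_dualH (hφ : ∀ x, φ x = x ^ q)
    (h : ∀ a < s, ∀ b < s, ∑ i, v i * φ (v i) * (x i ^ a * φ (x i) ^ b) = 0) :
    grsCode x v s ≤ dualH q n (grsCode x v s) := by
  refine Submodule.span_le.2 ?_
  rintro _ ⟨a, rfl⟩
  rw [grsCode, SetLike.mem_coe, mem_dualH_span_iff hφ]
  rintro _ ⟨b, rfl⟩
  rw [← h a a.2 b b.2]
  refine sum_congr rfl fun i _ => ?_
  rw [← hφ, map_mul, map_pow]
  ring

theorem exists_mds_dualH_le {ι : Type*} [Fintype ι] (hφ : ∀ x, φ x = x ^ q)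
    (hinv : Function.Involutive φ) (hnorm : ∀ w, w ≠ 0 → φ w = w → ∃ v, v * φ v = w)
    (hcard : Fintype.card ι = n) (hs : s < n) {x w : ι → F} (hx : Function.Injective x)
    (hw : ∀ i, w i ≠ 0) (hwφ : ∀ i, φ (w i) = w i)
    (h : ∀ a < s, ∀ b < s, ∑ i, w i * (x i ^ a * φ (x i) ^ b) = 0) :
    ∃ C : Submodule F (Fin n → F), dualH q n C ≤ C ∧ Module.finrank F C = n - s ∧
      IsLeast {d : ℕ | ∃ x ∈ C, x ≠ 0 ∧ wt x = d} (s + 1) := by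
  choose v hvw using fun i => hnorm (w i) (hw i) (hwφ i)
  have hv (i) : v i ≠ 0 := left_ne_zero_of_mul (hvw i ▸ hw i)
  let e : Fin n ≃ ι := (Fintype.equivFinOfCardEq hcard).symm
  have hxe : Function.Injective (x ∘ e) := hx.comp e.injective
  have hve (i) : (v ∘ e) i ≠ 0 := hv (e i)
  have hle : grsCode (x ∘ e) (v ∘ e) s ≤ dualH q n (grsCode (x ∘ e) (v ∘ e) s) :=
    grsCode_le_dualH hφ fun a ha b hb => by
      simpa only [hvw, Function.comp_apply] using
        (e.sum_comp fun i => v i * φ (v i) * (x i ^ a * φ (x i) ^ b)).trans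
          (by simpa only [hvw] using h a ha b hb)
  have hrank : Module.finrank F (dualH q n (grsCode (x ∘ e) (v ∘ e) s)) = n - s := by
    rw [finrank_dualH hφ hinv, finrank_grsCode hs.le hxe hve]
  refine ⟨_, (dualH_dualH hφ hinv _).trans_le hle, hrank, ?_⟩
  exact isLeast_wt_of_forall_lt_wt hs hrank fun y =>
    lt_wt_of_mem_dualH_grsCode hφ hxe hve

end ReedSolomon

section TwistedVandermonde

variable {F ι : Type*} [Field F] {φ : F →+* F}

open Polynomial in
theorem sum_eval_div_prod_sub_eq_zero [DecidableEq ι] {S : Finset ι} {y : ι → F}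
    (hy : Set.InjOn y S) {P : F[X]} (hP : P.natDegree + 2 ≤ #S) :
    ∑ k ∈ S, P.eval (y k) / ∏ l ∈ S.erase k, (y k - y l) = 0 := by
  rw [← Lagrange.coeff_eq_sum hy
    (degree_le_natDegree.trans_lt (by exact_mod_cast (by omega)))]
  exact coeff_eq_zero_of_natDegree_lt (by omega)

/-- The determinant of the vectors `(φ x, x)` and `(φ y, y)`, divided by `ε`. For `φ ε = -ε` it is
fixed by `φ`, unlike the Vandermonde factor `φ x / x - φ y / y`. -/
def twistedDet (φ : F →+* F) (ε x y : F) : F :=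
  (φ x * y - φ y * x) / ε

theorem map_twistedDet (hinv : Function.Involutive φ) {ε : F} (hε : φ ε = -ε) (x y : F) :
    φ (twistedDet φ ε x y) = twistedDet φ ε x y := by
  simp only [twistedDet, map_div₀, map_sub, map_mul, hinv _, hε, div_neg, ← neg_div]
  ring

theorem twistedDet_eq {ε x y : F} (hx : x ≠ 0) (hy : y ≠ 0) :
    twistedDet φ ε x y = x / ε * y * (φ x / x - φ y / y) := by
  rw [twistedDet]
  field_simp

theorem twistedDet_ne_zero {ε x y : F} (hε : ε ≠ 0) (hx : x ≠ 0) (hy : y ≠ 0)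
    (hxy : φ x / x ≠ φ y / y) : twistedDet φ ε x y ≠ 0 := by
  rw [twistedDet_eq hx hy]
  exact mul_ne_zero (mul_ne_zero (div_ne_zero hx hε) hy) (sub_ne_zero.2 hxy)

theorem prod_twistedDet {ε x : F} (hx : x ≠ 0) {T : Finset ι} {z : ι → F}
    (hz : ∀ k ∈ T, z k ≠ 0) :
    ∏ k ∈ T, twistedDet φ ε x (z k) =
      (x / ε) ^ #T * (∏ k ∈ T, z k) * ∏ k ∈ T, (φ x / x - φ (z k) / z k) := by
  rw [prod_congr rfl fun k hk => twistedDet_eq hx (hz k hk), prod_mul_distrib, prod_mul_distrib,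
    prod_const]

theorem exists_map_eq_neg (hinv : Function.Involutive φ) (hne : ∃ x, φ x ≠ x) :
    ∃ ε, ε ≠ 0 ∧ φ ε = -ε := by
  obtain ⟨x, hx⟩ := hne
  exact ⟨φ x - x, sub_ne_zero.2 hx, by rw [map_sub, hinv, neg_sub]⟩

variable [DecidableEq ι]

open Polynomial in
/-- With `y k := φ (z k) / z k` in place of `φ (z k)`, twisted determinants become differences of
nodes, up to factors whose powers cancel because `i + j + 2 + #T = #S`. -/
theorem prod_twistedDet_div_mul_eq {ε : F} {z : ι → F} {S T : Finset ι} {k : ι} {i j : ℕ}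
    (hz : ∀ k, z k ≠ 0) (hε : ε ≠ 0) (hk : k ∈ S) (hij : i + j + 2 + #T = #S) :
    (∏ t ∈ T, twistedDet φ ε (z k) (z t)) / (∏ l ∈ S.erase k, twistedDet φ ε (z k) (z l)) *
        (z k ^ i * φ (z k) ^ j) =
      ε ^ (i + j + 1) * (∏ t ∈ T, z t) / (∏ l ∈ S, z l) *
        ((X ^ j * ∏ t ∈ T, (X - C (φ (z t) / z t))).eval (φ (z k) / z k) /
          ∏ l ∈ S.erase k, (φ (z k) / z k - φ (z l) / z l)) := by
  have hcard : #(S.erase k) = #T + (i + j + 1) := by rw [card_erase_of_mem hk]; omega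
  have hprod : ∏ l ∈ S.erase k, z l ≠ 0 := prod_ne_zero_iff.2 fun l _ => hz l
  have hzk := hz k
  rw [prod_twistedDet hzk fun t _ => hz t, prod_twistedDet hzk fun l _ => hz l, hcard,
    ← mul_prod_erase S z hk]
  simp only [eval_mul, eval_pow, eval_X, eval_prod, eval_sub, eval_C, div_pow, pow_add, pow_one]
  field_simp

/-- The weights are quotients of twisted determinants. The sum becomes a Lagrange interpolation sum
at the nodes `φ (z k) / z k` for a polynomial of degree `j + #T ≤ #S - 2`. -/
theorem exists_fixed_weights (hinv : Function.Involutive φ) (hne : ∃ x, φ x ≠ x)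
    {z : ι → F} {S T : Finset ι} (hz : ∀ k, z k ≠ 0) (hST : Disjoint S T)
    (hinj : Set.InjOn (fun k => φ (z k) / z k) (S ∪ T : Finset ι)) :
    ∃ u : ι → F, (∀ k ∈ S, u k ≠ 0) ∧ (∀ k ∈ S, φ (u k) = u k) ∧
      ∀ i j, i + j + 2 + #T = #S → ∑ k ∈ S, u k * (z k ^ i * φ (z k) ^ j) = 0 := by
  obtain ⟨ε, hε, hεφ⟩ := exists_map_eq_neg hinv hne
  have hdet {k l} (hk : k ∈ S) (hl : l ∈ S ∪ T) (hkl : k ≠ l) : twistedDet φ ε (z k) (z l) ≠ 0 :=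
    twistedDet_ne_zero hε (hz k) (hz l) (hinj.ne (mem_union_left T hk) hl hkl)
  refine ⟨fun k => (∏ t ∈ T, twistedDet φ ε (z k) (z t)) /
    ∏ l ∈ S.erase k, twistedDet φ ε (z k) (z l), fun k hk => ?_, fun k _ => ?_, fun i j hij => ?_⟩
  · refine div_ne_zero (prod_ne_zero_iff.2 fun t ht => ?_) (prod_ne_zero_iff.2 fun l hl => ?_)
    · exact hdet hk (mem_union_right S ht) (disjoint_left.1 hST hk <| · ▸ ht)
    · exact hdet hk (mem_union_left T (mem_of_mem_erase hl)) (ne_of_mem_erase hl).symm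
  · simp only [map_div₀, map_prod, map_twistedDet hinv hεφ]
  · rw [sum_congr rfl fun k hk => prod_twistedDet_div_mul_eq hz hε hk hij, ← mul_sum,
      sum_eval_div_prod_sub_eq_zero (hinj.mono (by simp)), mul_zero]
    rw [Polynomial.natDegree_X_pow_mul _ (Polynomial.monic_prod_X_sub_C _ T).ne_zero,
      Polynomial.natDegree_finsetProd_X_sub_C_eq_card]
    omega

end TwistedVandermonde

section CosetGrid

variable {F : Type*} [Field F] {φ : F →+* F} {g h : F} {q s r c : ℕ} {K L : Finset ℕ} {u v : ℕ → F}

theorem geom_sum_pow_eq_zero_of_not_dvd {d e : ℕ} (hh : IsPrimitiveRoot h d) (he : ¬d ∣ e) :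
    ∑ l ∈ range d, (h ^ e) ^ l = 0 := by
  have hne : h ^ e - 1 ≠ 0 := sub_ne_zero.2 <| mt (hh.pow_eq_one_iff_dvd e).1 he
  refine (mul_eq_zero.1 ?_).resolve_left hne
  rw [mul_geom_sum, pow_right_comm, hh.pow_eq_one, one_pow, sub_self]

theorem eq_and_eq_of_pow_mul_pow_pow_eq {d e k k' l l' : ℕ} (hg : IsPrimitiveRoot g (d * e))
    (hk : k < e) (hk' : k' < e) (hl : l < d) (hl' : l' < d)
    (heq : g ^ k * (g ^ e) ^ l = g ^ k' * (g ^ e) ^ l') : k = k' ∧ l = l' := by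
  have exponent_lt {k l} (hk : k < e) (hl : l < d) : k + e * l < d * e := by nlinarith
  simp only [← pow_mul, ← pow_add] at heq
  have hexp := hg.pow_inj (exponent_lt hk hl) (exponent_lt hk' hl') heq
  have hkk : k = k' := by
    simpa [Nat.mod_eq_of_lt, hk, hk'] using congrArg (· % e) hexp
  subst hkk
  exact ⟨rfl, Nat.eq_of_mul_eq_mul_left (k.zero_le.trans_lt hk) (Nat.add_left_cancel hexp)⟩

theorem injOn_map_pow_div (hφ : ∀ x, φ x = x ^ q) (hq : 1 < q)
    (hg : IsPrimitiveRoot g ((q - 1) * (q + 1))) :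
    Set.InjOn (fun k => φ (g ^ k) / g ^ k) (range (q + 1)) := by
  have hpos : 0 < (q - 1) * (q + 1) := Nat.mul_pos (by omega) (by omega)
  have hg0 : g ≠ 0 := hg.ne_zero hpos.ne'
  have hratio (k) : φ (g ^ k) / g ^ k = (g ^ (q - 1)) ^ k := by
    rw [hφ, pow_right_comm, ← div_pow, pow_sub₀ g hg0 hq.le, pow_one, div_eq_mul_inv]
  intro k hk l hl hkl
  simp only [hratio] at hkl
  exact (hg.pow hpos rfl).pow_inj (mem_range.1 hk) (mem_range.1 hl) hkl

theorem exists_map_ne (hφ : ∀ x, φ x = x ^ q) (hq : 1 < q)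
    (hg : IsPrimitiveRoot g ((q - 1) * (q + 1))) : ∃ x, φ x ≠ x := by
  refine ⟨g, fun hfix => zero_ne_one (α := ℕ) ?_⟩
  have hg0 : g ≠ 0 := hg.ne_zero (Nat.mul_pos (by omega) (by omega)).ne'
  refine injOn_map_pow_div hφ hq hg (by simp) (by simp; omega) ?_
  simp [hfix, hg0]

theorem isPrimitiveRoot_pow_add_one (hq : 1 < q) (hg : IsPrimitiveRoot g ((q - 1) * (q + 1))) :
    IsPrimitiveRoot (g ^ (q + 1)) (q - 1) :=
  hg.pow (Nat.mul_pos (by omega) (by omega)) (mul_comm _ _)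

theorem map_pow_add_one (hφ : ∀ x, φ x = x ^ q) (hq : 1 < q)
    (hg : IsPrimitiveRoot g ((q - 1) * (q + 1))) : φ (g ^ (q + 1)) = g ^ (q + 1) := by
  rw [hφ, ← pow_sub_one_mul (by omega), (isPrimitiveRoot_pow_add_one hq hg).pow_eq_one, one_mul]

theorem exists_mul_map_eq (hφ : ∀ x, φ x = x ^ q) (hq : 1 < q)
    (hg : IsPrimitiveRoot g ((q - 1) * (q + 1))) {w : F} (hw : w ≠ 0) (hwφ : φ w = w) :
    ∃ v, v * φ v = w := by
  have : NeZero (q - 1) := ⟨by omega⟩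
  have hw1 : w ^ (q - 1) = 1 := by
    rw [pow_sub₀ w hw hq.le, ← hφ, hwφ, pow_one, mul_inv_cancel₀ hw]
  obtain ⟨i, -, rfl⟩ := (isPrimitiveRoot_pow_add_one hq hg).eq_pow_of_pow_eq_one hw1
  exact ⟨g ^ i, by rw [hφ, ← pow_succ', pow_right_comm]⟩

theorem mul_map_pow_pow_half_eq (hφ : ∀ x, φ x = x ^ q) (hq : 1 < q) (hodd : Odd q)
    (hg : IsPrimitiveRoot g ((q - 1) * (q + 1))) (k : ℕ) :
    (g ^ k * φ (g ^ k)) ^ ((q - 1) / 2) = (-1) ^ k := by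
  have hsplit : (q - 1) * (q + 1) = (q + 1) * ((q - 1) / 2) * 2 := by
    rw [mul_assoc, Nat.div_mul_cancel (Nat.Odd.sub_odd hodd odd_one).two_dvd, mul_comm]
  have hneg : (g ^ (q + 1)) ^ ((q - 1) / 2) = -1 := by
    rw [← pow_mul]
    exact (hg.pow (Nat.mul_pos (by omega) (by omega)) hsplit).eq_neg_one_of_two_right
  rw [hφ, ← pow_succ', pow_right_comm g, pow_right_comm _ k, hneg]

/-- Nonzero `φ`-fixed weights `u` on the points `g ^ k`, `k ∈ K`, which annihilate every monomial
`x ^ i * φ x ^ j` with `i + j + 2 = r`, also after the twist by the sign `(-1) ^ k`. -/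
structure IsSelfOrthogonalWeight (φ : F →+* F) (g : F) (K : Finset ℕ) (r : ℕ) (u : ℕ → F) :
    Prop where
  ne_zero : ∀ k ∈ K, u k ≠ 0
  map_eq : ∀ k ∈ K, φ (u k) = u k
  sum_eq_zero : ∀ i j, i + j + 2 = r → ∑ k ∈ K, u k * ((g ^ k) ^ i * φ (g ^ k) ^ j) = 0
  alternating_sum_eq_zero : ∀ i j, i + j + 2 = r →
    ∑ k ∈ K, (-1) ^ k * (u k * ((g ^ k) ^ i * φ (g ^ k) ^ j)) = 0

theorem IsSelfOrthogonalWeight.union (hKL : Disjoint K L) (hu : IsSelfOrthogonalWeight φ g K r u)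
    (hv : IsSelfOrthogonalWeight φ g L r v) :
    IsSelfOrthogonalWeight φ g (K ∪ L) r (K.piecewise u v) := by
  have piecewise_left {k} (hk : k ∈ K) : K.piecewise u v k = u k := piecewise_eq_of_mem _ _ _ hk
  have piecewise_right {k} (hk : k ∈ L) : K.piecewise u v k = v k :=
    piecewise_eq_of_notMem _ _ _ (disjoint_right.1 hKL hk)
  have sum_union_eq (f : ℕ → F → F) :
      ∑ k ∈ K ∪ L, f k (K.piecewise u v k) = ∑ k ∈ K, f k (u k) + ∑ k ∈ L, f k (v k) := by
    rw [sum_union hKL, sum_congr rfl fun k hk => by rw [piecewise_left hk],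
      sum_congr (s₁ := L) rfl fun k hk => by rw [piecewise_right hk]]
  refine ⟨fun k hk => ?_, fun k hk => ?_, fun i j hij => ?_, fun i j hij => ?_⟩
  · rcases mem_union.1 hk with hk | hk
    · exact piecewise_left hk ▸ hu.ne_zero k hk
    · exact piecewise_right hk ▸ hv.ne_zero k hk
  · rcases mem_union.1 hk with hk | hk
    · exact piecewise_left hk ▸ hu.map_eq k hk
    · exact piecewise_right hk ▸ hv.map_eq k hk
  · rw [sum_union_eq fun k w => w * ((g ^ k) ^ i * φ (g ^ k) ^ j), hu.sum_eq_zero i j hij,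
      hv.sum_eq_zero i j hij, add_zero]
  · rw [sum_union_eq fun k w => (-1) ^ k * (w * ((g ^ k) ^ i * φ (g ^ k) ^ j)),
      hu.alternating_sum_eq_zero i j hij, hv.alternating_sum_eq_zero i j hij, add_zero]

theorem exists_isSelfOrthogonalWeight_of_neg_one_pow_eq (hφ : ∀ x, φ x = x ^ q)
    (hinv : Function.Involutive φ) (hq : 1 < q) (hg : IsPrimitiveRoot g ((q - 1) * (q + 1)))
    (hK : K ⊆ range (q + 1)) (hrK : r ≤ #K) (hKr : 2 * #K ≤ q + 1 + r) {σ : F}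
    (hσ : ∀ k ∈ K, (-1) ^ k = σ) : ∃ u, IsSelfOrthogonalWeight φ g K r u := by
  have hg0 : g ≠ 0 := hg.ne_zero (Nat.mul_pos (by omega) (by omega)).ne'
  obtain ⟨T, hTsub, hTcard⟩ : ∃ T ⊆ range (q + 1) \ K, #T = #K - r :=
    exists_subset_card_eq (by rw [card_sdiff_of_subset hK, card_range]; omega)
  have hKT : K ∪ T ⊆ range (q + 1) := union_subset hK (hTsub.trans sdiff_subset)
  obtain ⟨u, hu, huφ, hsum⟩ := exists_fixed_weights hinv (exists_map_ne hφ hq hg)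
    (z := fun k => g ^ k) (fun k => pow_ne_zero k hg0)
    (disjoint_sdiff.mono_right hTsub) ((injOn_map_pow_div hφ hq hg).mono (coe_subset.2 hKT))
  refine ⟨u, hu, huφ, fun i j hij => hsum i j (by omega), fun i j hij => ?_⟩
  rw [sum_congr rfl fun k hk => by rw [hσ k hk], ← mul_sum, hsum i j (by omega), mul_zero]

theorem exists_isSelfOrthogonalWeight_of_le_half (hφ : ∀ x, φ x = x ^ q)
    (hinv : Function.Involutive φ) (hq : 1 < q) (hg : IsPrimitiveRoot g ((q - 1) * (q + 1)))
    (hc : c ≤ (q + 1) / 2) :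
    ∃ K ⊆ range (q + 1), #K = c ∧ ∃ u, IsSelfOrthogonalWeight φ g K c u := by
  have hcard : #((range c).image (2 * ·)) = c := by
    rw [card_image_of_injective _ (mul_right_injective₀ two_ne_zero), card_range]
  have hsub : (range c).image (2 * ·) ⊆ range (q + 1) := by
    intro k hk
    simp only [mem_image, mem_range] at hk ⊢
    omega
  refine ⟨_, hsub, hcard, exists_isSelfOrthogonalWeight_of_neg_one_pow_eq hφ hinv hq hg hsub
    hcard.ge (by omega) (σ := 1) fun k hk => ?_⟩
  obtain ⟨l, -, rfl⟩ := mem_image.1 hk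
  exact (even_two_mul l).neg_one_pow

theorem card_filter_even_range (n : ℕ) : #{k ∈ range n | Even k} = (n + 1) / 2 := by
  induction n with
  | zero => rfl
  | succ n ih =>
    rw [range_add_one, filter_insert]
    split_ifs with hn
    · rw [card_insert_of_notMem (by simp), ih]
      grind
    · rw [ih]
      grind

theorem exists_isSelfOrthogonalWeight_of_le (hφ : ∀ x, φ x = x ^ q)
    (hinv : Function.Involutive φ) (hq : 1 < q) (hg : IsPrimitiveRoot g ((q - 1) * (q + 1)))
    (hc : c ≤ q + 1) :
    ∃ K ⊆ range (q + 1), #K = c ∧ ∃ u, IsSelfOrthogonalWeight φ g K (c / 2) u := by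
  let E := {k ∈ range c | Even k}
  let O := {k ∈ range c | ¬Even k}
  have hE : #E = (c + 1) / 2 := card_filter_even_range c
  have hEO : #E + #O = c := by rw [card_filter_add_card_filter_not, card_range]
  have hsub : range c ⊆ range (q + 1) := range_mono hc
  obtain ⟨u, hu⟩ := exists_isSelfOrthogonalWeight_of_neg_one_pow_eq hφ hinv hq hg (K := E)
    ((filter_subset _ _).trans hsub) (r := c / 2) (by omega) (by omega) (σ := 1)
    fun k hk => (mem_filter.1 hk).2.neg_one_pow
  obtain ⟨v, hv⟩ := exists_isSelfOrthogonalWeight_of_neg_one_pow_eq hφ hinv hq hg (K := O)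
    ((filter_subset _ _).trans hsub) (r := c / 2) (by omega) (by omega) (σ := -1)
    fun k hk => (Nat.not_even_iff_odd.1 (mem_filter.1 hk).2).neg_one_pow
  refine ⟨range c, hsub, card_range c, E.piecewise u v, ?_⟩
  rw [← filter_union_filter_not_eq Even (range c)]
  exact hu.union (disjoint_filter_filter_not _ _ _) hv

theorem sum_grid_eq_sum_mul_geom_sum (hh : φ h = h) (K : Finset ℕ) (u z : ℕ → F)
    (d e i j : ℕ) :
    ∑ k ∈ K, ∑ l ∈ range d,
        u k * (h ^ l) ^ e * ((z k * h ^ l) ^ i * φ (z k * h ^ l) ^ j) =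
      (∑ k ∈ K, u k * (z k ^ i * φ (z k) ^ j)) * ∑ l ∈ range d, (h ^ (i + j + e)) ^ l := by
  simp only [sum_mul_sum, map_mul, map_pow, hh]
  exact sum_congr rfl fun k _ => sum_congr rfl fun l _ => by ring

theorem eq_or_eq_add_half_of_dvd (hodd : Odd q) (hr : r ≤ q) (hs : s + 2 ≤ (q + 1) / 2 + r)
    {i j : ℕ} (hi : i < s) (hj : j < s) (hdvd : q - 1 ∣ i + j + (q + 1 - r)) :
    i + j + 2 = r ∨ ∃ i' j', i = i' + (q - 1) / 2 ∧ j = j' + (q - 1) / 2 ∧ i' + j' + 2 = r := by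
  obtain ⟨m, rfl⟩ := hodd
  obtain ⟨t, ht⟩ := hdvd
  rw [Nat.add_sub_cancel] at ht ⊢
  obtain rfl | rfl | rfl | ht3 : t = 0 ∨ t = 1 ∨ t = 2 ∨ 3 ≤ t := by omega
  · omega
  · omega
  · exact .inr ⟨i - m, j - m, by omega, by omega, by omega⟩
  · have := Nat.mul_le_mul_left (2 * m) ht3
    omega

/-- The exponent `q + 1 - r` stands for `2 - r` modulo `q - 1`. -/
theorem IsSelfOrthogonalWeight.sum_grid_eq_zero (hu : IsSelfOrthogonalWeight φ g K r u)
    (hφ : ∀ x, φ x = x ^ q) (hq : 1 < q) (hodd : Odd q)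
    (hg : IsPrimitiveRoot g ((q - 1) * (q + 1))) (hr : r ≤ q) (hs : s + 2 ≤ (q + 1) / 2 + r)
    {i j : ℕ} (hi : i < s) (hj : j < s) :
    ∑ k ∈ K, ∑ l ∈ range (q - 1), u k * ((g ^ (q + 1)) ^ l) ^ (q + 1 - r) *
      ((g ^ k * (g ^ (q + 1)) ^ l) ^ i * φ (g ^ k * (g ^ (q + 1)) ^ l) ^ j) = 0 := by
  rw [sum_grid_eq_sum_mul_geom_sum (map_pow_add_one hφ hq hg) K u (fun k => g ^ k)]
  by_cases hdvd : q - 1 ∣ i + j + (q + 1 - r)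
  · refine mul_eq_zero_of_left ?_ _
    obtain hij | ⟨i', j', rfl, rfl, hij⟩ : i + j + 2 = r ∨
        ∃ i' j', i = i' + (q - 1) / 2 ∧ j = j' + (q - 1) / 2 ∧ i' + j' + 2 = r :=
      eq_or_eq_add_half_of_dvd hodd hr hs hi hj hdvd
    · exact hu.sum_eq_zero i j hij
    · refine (sum_congr rfl fun k _ => ?_).trans (hu.alternating_sum_eq_zero i' j' hij)
      rw [← mul_map_pow_pow_half_eq hφ hq hodd hg k]
      ring
  · rw [geom_sum_pow_eq_zero_of_not_dvd (isPrimitiveRoot_pow_add_one hq hg) hdvd, mul_zero]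

theorem IsSelfOrthogonalWeight.exists_mds (hu : IsSelfOrthogonalWeight φ g K r u)
    (hφ : ∀ x, φ x = x ^ q) (hinv : Function.Involutive φ) (hq : 1 < q) (hodd : Odd q)
    (hg : IsPrimitiveRoot g ((q - 1) * (q + 1))) (hK : K ⊆ range (q + 1)) (hr : r ≤ q)
    (hs : s + 2 ≤ (q + 1) / 2 + r) (hsn : s < #K * (q - 1)) :
    ∃ C : Submodule F (Fin (#K * (q - 1)) → F),
      dualH q (#K * (q - 1)) C ≤ C ∧ Module.finrank F C = #K * (q - 1) - s ∧
      IsLeast {d : ℕ | ∃ x ∈ C, x ≠ 0 ∧ wt x = d} (s + 1) := by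
  have hg0 : g ≠ 0 := hg.ne_zero (Nat.mul_pos (by omega) (by omega)).ne'
  refine exists_mds_dualH_le hφ hinv (fun w => exists_mul_map_eq hφ hq hg) (ι := K × Fin (q - 1))
    (by simp) hsn (x := fun p => g ^ (p.1 : ℕ) * (g ^ (q + 1)) ^ (p.2 : ℕ))
    (w := fun p => u p.1 * ((g ^ (q + 1)) ^ (p.2 : ℕ)) ^ (q + 1 - r)) ?_ (fun p => ?_)
    (fun p => ?_) fun i hi j hj => ?_
  · rintro ⟨k, l⟩ ⟨k', l'⟩ heq
    obtain ⟨hk, hl⟩ := eq_and_eq_of_pow_mul_pow_pow_eq hg (mem_range.1 (hK k.2))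
      (mem_range.1 (hK k'.2)) l.2 l'.2 heq
    exact Prod.ext (Subtype.ext hk) (Fin.ext hl)
  · exact mul_ne_zero (hu.ne_zero _ p.1.2) (pow_ne_zero _ (pow_ne_zero _ (pow_ne_zero _ hg0)))
  · rw [map_mul, map_pow, map_pow, map_pow_add_one hφ hq hg, hu.map_eq _ p.1.2]
  · rw [← hu.sum_grid_eq_zero hφ hq hodd hg hr hs hi hj, Fintype.sum_prod_type, ← sum_coe_sort K]
    exact sum_congr rfl fun k _ => Fin.sum_univ_eq_sum_range
      (fun l => u k * ((g ^ (q + 1)) ^ l) ^ (q + 1 - r) *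
        ((g ^ (k : ℕ) * (g ^ (q + 1)) ^ l) ^ i * φ (g ^ (k : ℕ) * (g ^ (q + 1)) ^ l) ^ j)) _

end CosetGrid

section FiniteField

variable {F : Type*} [Field F] [Fintype F]

theorem exists_involutive_pow_ringHom {q : ℕ} (hpp : IsPrimePow q)
    (hF : Fintype.card F = q ^ 2) :
    ∃ φ : F →+* F, (∀ x, φ x = x ^ q) ∧ Function.Involutive φ := by
  obtain ⟨p, k, hp, -, rfl⟩ := hpp
  have : Fact p.Prime := ⟨hp.nat_prime⟩
  have : CharP F p := charP_of_card_eq_prime_pow (f := k * 2) (by rw [hF, pow_mul])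
  refine ⟨iterateFrobenius F p k, fun x => rfl, fun x => ?_⟩
  rw [iterateFrobenius_def, iterateFrobenius_def, ← pow_mul, ← pow_two, ← hF, FiniteField.pow_card]

theorem exists_isPrimitiveRoot_card_sub_one :
    ∃ g : F, IsPrimitiveRoot g (Fintype.card F - 1) := by
  classical
  obtain ⟨g, hg⟩ := IsCyclic.exists_ofOrder_eq_natCard (α := Fˣ)
  refine ⟨g, IsPrimitiveRoot.coe_units_iff.2 ?_⟩
  rw [IsPrimitiveRoot.iff_orderOf, hg, Nat.card_eq_fintype_card, Fintype.card_units]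

end FiniteField

theorem stmt_11_general (q : ℕ) (hodd : Odd q) (hpp : IsPrimePow q)
    (F : Type*) [Field F] [Fintype F] (hF : Fintype.card F = q ^ 2)
    (c s : ℕ) (hc1 : 1 ≤ c) (hc2 : c ≤ q + 1)
    (hs : s ≤ (q + 1) / 2 + (if c ≤ (q + 1) / 2 then c else c / 2) - 2) :
    ∃ C : Submodule F (Fin (c * (q - 1)) → F),
      dualH q (c * (q - 1)) C ≤ C ∧
      Module.finrank F C = (c * (q - 1)) - s ∧
      IsLeast {d : ℕ | ∃ x ∈ C, x ≠ 0 ∧ wt x = d} (s + 1) := by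
  obtain ⟨φ, hφ, hinv⟩ := exists_involutive_pow_ringHom hpp hF
  have hq : 1 < q := hpp.one_lt
  obtain ⟨g, hg⟩ := exists_isPrimitiveRoot_card_sub_one (F := F)
  rw [hF, ← one_pow 2, Nat.sq_sub_sq, mul_comm] at hg
  have hsn : s < c * (q - 1) := by
    obtain ⟨m, rfl⟩ := hodd
    rw [Nat.add_sub_cancel]
    have : s + 1 ≤ m + c := by split_ifs at hs <;> omega
    nlinarith
  split_ifs at hs with hc
  · obtain ⟨K, hK, rfl, u, hu⟩ := exists_isSelfOrthogonalWeight_of_le_half hφ hinv hq hg hc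
    exact hu.exists_mds hφ hinv hq hodd hg hK (by omega) (by omega) hsn
  · obtain ⟨K, hK, rfl, u, hu⟩ := exists_isSelfOrthogonalWeight_of_le hφ hinv hq hg hc2
    exact hu.exists_mds hφ hinv hq hodd hg hK (by omega) (by omega) hsn

/-- case q = 2ab−1 with a, b odd and coprime:
there exists an [n, n−s, s+1]_{q²} Hermitian dual-containing code with
n = c(q−1), for 1 ≤ c ≤ 2(a+b−1) and 1 ≤ s ≤ ab + c₁ − 2, where c₁ = c if
c ≤ a+b−1 and c₁ = ⌊c/2⌋ otherwise. -/
theorem stmt_11 (q a b : ℕ) (ha : 0 < a) (hb : 0 < b) (haodd : Odd a)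
    (hbodd : Odd b) (hab : Nat.gcd a b = 1) (hq : q = 2 * a * b - 1)
    (hodd : Odd q) (hpp : IsPrimePow q)
    (F : Type*) [Field F] [Fintype F] (hF : Fintype.card F = q ^ 2)
    (c s : ℕ) (hc1 : 1 ≤ c) (hc2 : c ≤ 2 * (a + b - 1))
    (hs1 : 1 ≤ s) (hs2 : s ≤ a * b + (if c ≤ a + b - 1 then c else c / 2) - 2) :
    ∃ C : Submodule F (Fin (c * (q - 1)) → F),
      dualH q (c * (q - 1)) C ≤ C ∧
      Module.finrank F C = (c * (q - 1)) - s ∧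
      IsLeast {d : ℕ | ∃ x ∈ C, x ≠ 0 ∧ wt x = d} (s + 1) := by
  have hq2 : (q + 1) / 2 = a * b := by rw [mul_assoc] at hq; have := Nat.mul_pos ha hb; omega
  have hab_le : a + b - 1 ≤ a * b := Nat.add_sub_one_le_mul ha.ne' hb.ne'
  refine stmt_11_general q hodd hpp F hF c s hc1 (by omega) (hs2.trans ?_)
  split_ifs <;> omega
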